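/- (n-qubit Pauli twirl.) For every n : ℕ and every complex matrix E indexed by (Fin n → Fin 2), (1/4^n) • ∑_{a : Fin n → Fin 4} P_a * E * P_a = ((trace E)/2^n) • 1, where 1 is the identity matrix; that is, twirling over the 4^n Pauli strings sends every matrix to the corresponding scalar multiple of the identity. -/

import Mathlib

open Matrix Complex Kronecker

noncomputable def pauli : Fin 4 → Matrix (Fin 2) (Fin 2) ℂ
  | 0 => !![1, 0; 0, 1]
  | 1 => !![0, 1; 1, 0]
  | 2 => !![0, -Complex.I; Complex.I, 0]
  | 3 => !![1, 0; 0, -1]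

noncomputable def PauliString {n : ℕ} (a : Fin n → Fin 4) :
    Matrix (Fin n → Fin 2) (Fin n → Fin 2) ℂ :=
  Matrix.of fun f g => ∏ i, pauli (a i) (f i) (g i)

/-!
The Pauli matrices satisfy the completeness relation `∑ₐ σₐ ⊗ σₐ = 2 • SWAP`. Entrywise this is a
statement about sums of products, so by distributivity it passes to `n`-fold tensor products, where
the constant becomes `2 ^ n`. Contracting the resulting relation with `E` turns the swap into
`E ↦ trace E • 1`.
-/

section CompletenessRelation

variable {κ m n R : Type*} [Fintype κ] [DecidableEq m] [DecidableEq n]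

/-- The completeness relation `∑ₐ Aₐ ⊗ Bₐ = c • SWAP` for two families of matrices, which governs
the twirl `E ↦ ∑ₐ Aₐ E Bₐ`. It is written entrywise, the left side being the entry in row `(i, k)`
and column `(j, l)`, and allows rectangular matrices. -/
def HasCompletenessRelation [NonUnitalNonAssocSemiring R] (A : κ → Matrix m n R)
    (B : κ → Matrix n m R) (c : R) : Prop :=
  ∀ i j k l, ∑ a, A a i j * B a k l = if i = l ∧ j = k then c else 0

theorem HasCompletenessRelation.sum_mul_mul [Fintype n] [CommSemiring R] {A : κ → Matrix m n R}
    {B : κ → Matrix n m R} {c : R} (h : HasCompletenessRelation A B c) (E : Matrix n n R) :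
    ∑ a, A a * E * B a = (c * E.trace) • (1 : Matrix m m R) := by
  ext i l
  calc (∑ a, A a * E * B a) i l
      = ∑ k, ∑ j, ∑ a, A a i j * E j k * B a k l := by
        simp only [Matrix.sum_apply, Matrix.mul_apply, Finset.sum_mul]
        rw [Finset.sum_comm]
        exact Finset.sum_congr rfl fun k _ => Finset.sum_comm
    _ = ∑ k, ∑ j, (∑ a, A a i j * B a k l) * E j k := by
        simp only [Finset.sum_mul, mul_right_comm]
    _ = ∑ k, ∑ j, (if i = l ∧ j = k then c else 0) * E j k := by simp only [h i _ _ l]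
    _ = ((c * E.trace) • (1 : Matrix m m R)) i l := by
        by_cases hil : i = l <;> simp [hil, Matrix.trace, Finset.mul_sum]

end CompletenessRelation

section TensorProduct

variable {ι R : Type*} {κ m n : ι → Type*} [Fintype ι] [CommSemiring R]

/-- The tensor product `⨂ᵢ Mᵢ` of a finite family of matrices, of which Pauli strings are an
instance: the iterated Kronecker product, with rows and columns indexed by dependent functions on
`ι`. -/
def piKronecker (M : ∀ i, Matrix (m i) (n i) R) : Matrix (∀ i, m i) (∀ i, n i) R :=
  Matrix.of fun f g => ∏ i, M i (f i) (g i)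

theorem HasCompletenessRelation.piKronecker [DecidableEq ι] [∀ i, Fintype (κ i)]
    [∀ i, DecidableEq (m i)] [∀ i, DecidableEq (n i)] {A : ∀ i, κ i → Matrix (m i) (n i) R}
    {B : ∀ i, κ i → Matrix (n i) (m i) R} {c : ι → R}
    (h : ∀ i, HasCompletenessRelation (A i) (B i) (c i)) :
    HasCompletenessRelation (fun a : ∀ i, κ i => piKronecker fun i => A i (a i))
      (fun a => piKronecker fun i => B i (a i)) (∏ i, c i) := by
  intro f g g' f'
  calc ∑ a : ∀ i, κ i, (∏ i, A i (a i) (f i) (g i)) * ∏ i, B i (a i) (g' i) (f' i)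
      = ∏ i, ∑ b, A i b (f i) (g i) * B i b (g' i) (f' i) := by
        simp only [← Finset.prod_mul_distrib, Fintype.prod_sum]
    _ = ∏ i, if f i = f' i ∧ g i = g' i then c i else 0 := by simp only [h _ _ _ _ _]
    _ = if f = f' ∧ g = g' then ∏ i, c i else 0 := by
        simp only [Fintype.prod_ite_zero, forall_and, funext_iff]

end TensorProduct

theorem hasCompletenessRelation_pauli : HasCompletenessRelation pauli pauli 2 := by
  intro i j k l
  fin_cases i <;> fin_cases j <;> fin_cases k <;> fin_cases l <;>
    simp [Fin.sum_univ_four, pauli, one_add_one_eq_two]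

theorem hasCompletenessRelation_pauliString (n : ℕ) :
    HasCompletenessRelation (PauliString (n := n)) PauliString (2 ^ n) := by
  have tensor_power :=
    HasCompletenessRelation.piKronecker fun _ : Fin n => hasCompletenessRelation_pauli
  rw [Fin.prod_const] at tensor_power
  exact tensor_power

theorem n_qubit_pauli_twirl (n : ℕ)
    (E : Matrix (Fin n → Fin 2) (Fin n → Fin 2) ℂ) :
    ((1 : ℂ) / 4 ^ n) • ∑ a : Fin n → Fin 4, PauliString a * E * PauliString a =
      (Matrix.trace E / (2 : ℂ) ^ n) • (1 : Matrix (Fin n → Fin 2) (Fin n → Fin 2) ℂ) := by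
  have four_pow : (4 : ℂ) ^ n = 2 ^ n * 2 ^ n := by rw [← mul_pow]; norm_num
  rw [(hasCompletenessRelation_pauliString n).sum_mul_mul E, smul_smul, four_pow]
  congr 1
  field_simp
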